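/- Let F : ℝ^{d×n} → ℝ^{d×n} be defined by T(ζ)_{(i,·)} = ∫₀^{c_i} ∑_{j=1}^d F(ζ_j, c_j) φ_j(s) ds, where c_1,…,c_d are the Chebyshev nodes c_i = ℓ/2 + (ℓ/2)cos((2i−1)π/(2d)) on [0,ℓ], φ_j are the corresponding Lagrange basis polynomials, and suppose ‖F(x,t) − F(y,t)‖_p ≤ L‖x−y‖_p for all x, y and t ∈ [0,ℓ]. Then ‖T(x) − T(y)‖_{∞;p} ≤ 1000 ℓ L ‖x − y‖_{∞;p}, where ‖ζ‖_{∞;p} = max_{i∈[d]} ‖ζ_i‖_p. -/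

import Mathlib

/-- The `ℓ_p` norm of a vector. -/
noncomputable def lpNorm {m : ℕ} (v : Fin m → ℝ) (p : ℝ) : ℝ :=
  (∑ i, |v i| ^ p) ^ (1/p)

open Polynomial Polynomial.Chebyshev in
lemma cheb_int_bound {d : ℕ} (hd : d ≠ 0) (Q : ℝ[X]) (hQ : Q.degree < d)
    (hv : ∀ i ∈ Finset.range d,
      |Q.eval (Real.cos ((2 * (i:ℝ) + 1) / (2 * d) * Real.pi))| ≤ 1)
    (t : ℝ) (h1 : -1 ≤ t) (h2 : t ≤ 1) :
    |∫ s in (-1:ℝ)..t, Q.eval s| ≤ Real.pi := by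
  have hcont : Continuous fun s => Q.eval s := Q.continuous
  have hR : (C (1/2 : ℝ) * (Q * Q + 1)).degree < 2 * d := by
    have hnat : Q.natDegree < d := by
      by_cases h0 : Q = 0
      · subst h0; simpa using Nat.pos_of_ne_zero hd
      · exact (natDegree_lt_iff_degree_lt h0).2 hQ
    have h3 : (C (1/2 : ℝ) * (Q * Q + 1)).natDegree < 2 * d := by
      refine lt_of_le_of_lt (natDegree_C_mul_le _ _) ?_
      refine lt_of_le_of_lt (natDegree_add_le _ _) ?_
      have := natDegree_mul_le (p := Q) (q := Q)
      simp only [natDegree_one]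
      omega
    have := degree_le_natDegree.trans_lt (WithBot.coe_lt_coe.2 h3)
    exact_mod_cast this
  have hG := integral_eq_sumZeroes hd hR
  rw [integral_measureT] at hG
  have hS : sumZeroes d (C (1/2 : ℝ) * (Q * Q + 1)) ≤ Real.pi := by
    unfold sumZeroes
    have : ∑ i ∈ Finset.range d, (C (1/2 : ℝ) * (Q * Q + 1)).eval
        (Real.cos ((2 * (i:ℝ) + 1) / (2 * d) * Real.pi)) ≤ ∑ i ∈ Finset.range d, (1:ℝ) := by
      refine Finset.sum_le_sum fun i hi => ?_
      have := abs_le.1 (hv i hi)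
      simp only [eval_mul, eval_C, eval_add, eval_one]
      nlinarith
    have hd' : (0:ℝ) < d := by exact_mod_cast Nat.pos_of_ne_zero hd
    calc _ ≤ Real.pi / d * ∑ i ∈ Finset.range d, (1:ℝ) := by
            apply mul_le_mul_of_nonneg_left this; positivity
      _ = Real.pi := by simp; field_simp
  rw [← hG] at hS
  refine le_trans ?_ hS
  calc |∫ s in (-1:ℝ)..t, Q.eval s| ≤ ∫ s in (-1:ℝ)..t, |Q.eval s| :=
        intervalIntegral.abs_integral_le_integral_abs h1
    _ ≤ ∫ s in (-1:ℝ)..1, |Q.eval s| := by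
        refine intervalIntegral.integral_mono_interval le_rfl h1 h2 ?_ ?_
        · exact Filter.Eventually.of_forall fun s => abs_nonneg _
        · exact hcont.abs.intervalIntegrable _ _
    _ ≤ _ := by
        refine intervalIntegral.integral_mono_on_of_le_Ioo (by norm_num)
          (hcont.abs.intervalIntegrable _ _) ?_ ?_
        · exact intervalIntegrable_sqrt_one_sub_sq_inv.continuousOn_mul
            (Polynomial.continuous _).continuousOn
        · intro s hs
          have hpos : 0 < 1 - s ^ 2 := by nlinarith [hs.1, hs.2]
          have h3 : 1 ≤ √(1 - s ^ 2)⁻¹ := by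
            rw [Real.one_le_sqrt]
            exact (one_le_inv₀ hpos).2 (by nlinarith [sq_nonneg s])
          have h4 : |Q.eval s| ≤ (C (1/2 : ℝ) * (Q * Q + 1)).eval s := by
            simp only [eval_mul, eval_C, eval_add, eval_one]
            nlinarith [sq_nonneg (|Q.eval s| - 1), abs_mul_abs_self (Q.eval s)]
          exact h4.trans (le_mul_of_one_le_right ((abs_nonneg _).trans h4) h3)

open Polynomial in
lemma weight_bound {d : ℕ} (hd : 1 ≤ d) (ℓ : ℝ) (hℓ : 0 < ℓ) (c : Fin d → ℝ)
    (hc : ∀ i : Fin d, c i = ℓ/2 + ℓ/2 * Real.cos ((2*((i:ℕ):ℝ)+1) * Real.pi / (2*(d:ℝ))))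
    (i : Fin d) :
    ∑ j, |∫ s in (0:ℝ)..(c i), (Lagrange.basis Finset.univ c j).eval s| ≤ 1000 * ℓ := by
  have hd0 : (0:ℝ) < d := by exact_mod_cast hd
  have hinj : Set.InjOn c (Finset.univ : Finset (Fin d)) := by
    have hmem : ∀ a : Fin d, (2*((a:ℕ):ℝ)+1) * Real.pi / (2*(d:ℝ)) ∈ Set.Icc 0 Real.pi := by
      intro a
      refine ⟨by positivity, ?_⟩
      rw [div_le_iff₀ (by positivity)]
      have : ((a:ℕ):ℝ) + 1 ≤ d := by exact_mod_cast a.2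
      nlinarith [Real.pi_pos]
    intro a _ b _ hab
    rw [hc, hc] at hab
    have h1 : Real.cos ((2*((a:ℕ):ℝ)+1) * Real.pi / (2*(d:ℝ))) =
      Real.cos ((2*((b:ℕ):ℝ)+1) * Real.pi / (2*(d:ℝ))) := by
      have : ℓ / 2 ≠ 0 := by positivity
      exact mul_left_cancel₀ this (add_left_cancel hab)
    have h2 := Real.injOn_cos (hmem a) (hmem b) h1
    have hpi := Real.pi_pos
    field_simp at h2
    have h3 : ((a:ℕ):ℝ) = ((b:ℕ):ℝ) := by linarith
    exact Fin.ext (by exact_mod_cast h3)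
  set w : Fin d → ℝ := fun j => ∫ s in (0:ℝ)..(c i), (Lagrange.basis Finset.univ c j).eval s
    with hw
  set ε : Fin d → ℝ := fun j => if 0 ≤ w j then 1 else -1 with hε
  set P := Lagrange.interpolate Finset.univ c ε with hP
  have hsum : ∑ j, |w j| = ∫ s in (0:ℝ)..(c i), P.eval s := by
    have : ∀ s, P.eval s = ∑ j, ε j * (Lagrange.basis Finset.univ c j).eval s := by
      intro s; simp [hP, Lagrange.interpolate_apply, eval_finsetSum]
    simp_rw [this]
    rw [intervalIntegral.integral_finsetSum]
    · refine Finset.sum_congr rfl fun j _ => ?_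
      rw [intervalIntegral.integral_const_mul]
      change |w j| = ε j * w j
      simp only [hε]
      split_ifs with h
      · rw [abs_of_nonneg h, one_mul]
      · rw [abs_of_neg (not_le.1 h)]; ring
    · intro j _
      exact (continuous_const.mul (Polynomial.continuous _)).intervalIntegrable _ _
  set Q := P.comp (C (ℓ/2) * X + C (ℓ/2)) with hQ
  have hQe : ∀ s, Q.eval s = P.eval (ℓ/2 * s + ℓ/2) := by intro s; simp [hQ]
  have hdeg : Q.degree < d := by
    have h1 : P.degree < (Finset.univ : Finset (Fin d)).card :=
      Lagrange.degree_interpolate_lt ε hinj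
    rw [Finset.card_univ, Fintype.card_fin] at h1
    have h2 : P.natDegree < d := by
      by_cases h0 : P = 0
      · rw [h0]; simp; omega
      · exact (natDegree_lt_iff_degree_lt h0).2 h1
    have h3 : Q.natDegree < d := by
      rw [hQ, natDegree_comp, natDegree_linear (by positivity)]; omega
    exact degree_le_natDegree.trans_lt (WithBot.coe_lt_coe.2 h3)
  have hval : ∀ k ∈ Finset.range d,
      |Q.eval (Real.cos ((2 * (k:ℝ) + 1) / (2 * d) * Real.pi))| ≤ 1 := by
    intro k hk
    have h1 : ℓ/2 * Real.cos ((2 * (k:ℝ) + 1) / (2 * d) * Real.pi) + ℓ/2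
        = c ⟨k, Finset.mem_range.1 hk⟩ := by
      rw [hc, add_comm]
      congr 3
      simp only
      ring
    rw [hQe, h1, hP, Lagrange.eval_interpolate_at_node _ hinj (Finset.mem_univ _)]
    simp only [hε]
    split_ifs <;> simp
  have hb := cheb_int_bound (by omega) Q hdeg hval
    (Real.cos ((2*((i:ℕ):ℝ)+1) * Real.pi / (2*(d:ℝ)))) (Real.neg_one_le_cos _) (Real.cos_le_one _)
  have hsub : (∫ s in (0:ℝ)..(c i), P.eval s) = ℓ/2 *
      ∫ s in (-1:ℝ)..(Real.cos ((2*((i:ℕ):ℝ)+1) * Real.pi / (2*(d:ℝ)))), Q.eval s := by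
    simp_rw [hQe]
    rw [intervalIntegral.mul_integral_comp_mul_add (f := fun s => P.eval s)]
    congr 1
    · ring
    · rw [hc]; ring
  change ∑ j, |w j| ≤ _
  rw [hsum, hsub]
  have := (le_abs_self _).trans hb
  nlinarith [Real.pi_le_four]

lemma lpNorm_nonneg' {m : ℕ} (v : Fin m → ℝ) (p : ℝ) : 0 ≤ lpNorm v p := by
  unfold lpNorm; positivity

lemma lpNorm_smul' {m : ℕ} (a : ℝ) (v : Fin m → ℝ) (p : ℝ) (hp : 1 ≤ p) :
    lpNorm (fun k => a * v k) p = |a| * lpNorm v p := by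
  unfold lpNorm
  have : ∀ k, |a * v k| ^ p = |a| ^ p * |v k| ^ p := fun k => by
    rw [abs_mul, Real.mul_rpow (abs_nonneg _) (abs_nonneg _)]
  simp_rw [this]
  rw [← Finset.mul_sum, Real.mul_rpow (by positivity) (by positivity),
    ← Real.rpow_mul (abs_nonneg _), mul_one_div_cancel (by positivity), Real.rpow_one]

lemma lpNorm_sum' {m : ℕ} {ι : Type*} (s : Finset ι) (a : ι → ℝ) (v : ι → Fin m → ℝ) (p : ℝ)
    (hp : 1 ≤ p) :
    lpNorm (fun k => ∑ j ∈ s, a j * v j k) p ≤ ∑ j ∈ s, |a j| * lpNorm (v j) p := by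
  classical
  induction s using Finset.induction_on with
  | empty =>
    have h0 : p ≠ 0 := by positivity
    simp [lpNorm, Real.zero_rpow h0, Real.zero_rpow (inv_ne_zero h0)]
  | insert b s hb ih =>
    simp_rw [Finset.sum_insert hb]
    refine le_trans (Real.Lp_add_le Finset.univ (fun k => a b * v b k)
      (fun k => ∑ j ∈ s, a j * v j k) hp) ?_
    exact add_le_add (lpNorm_smul' (a b) (v b) p hp).le ih

/-- The collocation operator `T` on Chebyshev nodes is a `1000ℓL`-contraction in the
`‖·‖_{∞;p}` norm when `F` is `L`-Lipschitz in `‖·‖_p`. -/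
theorem collocation_contraction {n d : ℕ} (hd : 1 ≤ d) (ℓ L p : ℝ)
    (hℓ : 0 < ℓ) (hL : 0 ≤ L) (hp : 1 ≤ p)
    (F : (Fin n → ℝ) → ℝ → (Fin n → ℝ))
    (hF : ∀ x y : Fin n → ℝ, ∀ t ∈ Set.Icc (0:ℝ) ℓ,
      lpNorm (F x t - F y t) p ≤ L * lpNorm (x - y) p)
    (c : Fin d → ℝ)
    (hc : ∀ i : Fin d, c i = ℓ/2 + ℓ/2 * Real.cos ((2*((i:ℕ):ℝ)+1) * Real.pi / (2*(d:ℝ))))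
    (x y : Fin d → Fin n → ℝ) :
    let T : (Fin d → Fin n → ℝ) → Fin d → Fin n → ℝ := fun ζ i k =>
      ∫ s in (0:ℝ)..(c i), ∑ j, F (ζ j) (c j) k *
        ∏ j' ∈ Finset.univ.erase j, (s - c j') / (c j - c j')
    (⨆ i, lpNorm (T x i - T y i) p) ≤ 1000 * ℓ * L * ⨆ i, lpNorm (x i - y i) p := by
  intro T
  have hd0 : (0:ℝ) < d := by exact_mod_cast hd
  have : Nonempty (Fin d) := ⟨⟨0, hd⟩⟩
  set M := ⨆ i, lpNorm (x i - y i) p with hM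
  have hle : ∀ j, lpNorm (x j - y j) p ≤ M := fun j =>
    le_ciSup (f := fun i => lpNorm (x i - y i) p) (Set.finite_range _).bddAbove j
  have hM0 : 0 ≤ M := (lpNorm_nonneg' _ p).trans (hle ⟨0, hd⟩)
  have hcm : ∀ j, c j ∈ Set.Icc (0:ℝ) ℓ := by
    intro j
    have h1 := Real.neg_one_le_cos ((2*((j:ℕ):ℝ)+1) * Real.pi / (2*(d:ℝ)))
    have h2 := Real.cos_le_one ((2*((j:ℕ):ℝ)+1) * Real.pi / (2*(d:ℝ)))
    rw [hc]
    constructor <;> nlinarith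
  refine ciSup_le fun i => ?_
  have hT : ∀ ζ k, T ζ i k = ∑ j,
      (∫ s in (0:ℝ)..(c i), (Lagrange.basis Finset.univ c j).eval s) * F (ζ j) (c j) k := by
    intro ζ k
    have hb : ∀ j s, ∏ j' ∈ Finset.univ.erase j, (s - c j') / (c j - c j')
        = (Lagrange.basis Finset.univ c j).eval s := by
      intro j s
      rw [Lagrange.basis, Polynomial.eval_prod]
      refine Finset.prod_congr rfl fun j' _ => ?_
      simp only [Lagrange.basisDivisor, Polynomial.eval_mul, Polynomial.eval_C,
        Polynomial.eval_sub, Polynomial.eval_X]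
      rw [div_eq_inv_mul]
    simp only [T, hb]
    rw [intervalIntegral.integral_finsetSum]
    · refine Finset.sum_congr rfl fun j _ => ?_
      rw [intervalIntegral.integral_const_mul, mul_comm]
    · intro j _
      exact (continuous_const.mul (Polynomial.continuous _)).intervalIntegrable _ _
  have hdiff : T x i - T y i = fun k => ∑ j,
      (∫ s in (0:ℝ)..(c i), (Lagrange.basis Finset.univ c j).eval s) *
        (F (x j) (c j) - F (y j) (c j)) k := by
    funext k
    rw [Pi.sub_apply, hT, hT, ← Finset.sum_sub_distrib]
    refine Finset.sum_congr rfl fun j _ => ?_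
    rw [Pi.sub_apply, mul_sub]
  rw [hdiff]
  refine (lpNorm_sum' Finset.univ _ (fun j => F (x j) (c j) - F (y j) (c j)) p hp).trans ?_
  calc _ ≤ ∑ j, |∫ s in (0:ℝ)..(c i), (Lagrange.basis Finset.univ c j).eval s| * (L * M) := by
        refine Finset.sum_le_sum fun j _ => mul_le_mul_of_nonneg_left ?_ (abs_nonneg _)
        exact (hF _ _ _ (hcm j)).trans (mul_le_mul_of_nonneg_left (hle j) hL)
    _ = (∑ j, |∫ s in (0:ℝ)..(c i), (Lagrange.basis Finset.univ c j).eval s|) * (L * M) := by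
        rw [Finset.sum_mul]
    _ ≤ 1000 * ℓ * (L * M) :=
        mul_le_mul_of_nonneg_right (weight_bound hd ℓ hℓ c hc i) (by positivity)
    _ = _ := by ring
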